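/- Let n ≥ 1 and let t, y_1, …, y_n be nonzero complex numbers with t ≠ 1, y_1^2 ≠ 1, and t y_1 ≠ t^{±1} y_i^{±1} for all relevant indices so that x = t y_1 is a simple pole of the function g(x) = (1/x) · ∏_{i=1}^n [(1 − y_i/x)(1 − y_i^{−1}/x)] / [(1 − t y_i/x)(1 − t y_i^{−1}/x)]. Then the residue of g at x = t y_1, i.e. lim_{x → t y_1} (x − t y_1) g(x), equals t^{1−2n} · (1 − t^{−1})(1 − t y_1^2)/(1 − y_1^2) · ∏_{2≤j≤n} [(1 − t y_1 y_j)(1 − t y_1/y_j)] / [(1 − y_1 y_j)(1 − y_1/y_j)]. -/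

import Mathlib

open Finset Filter Topology

noncomputable section

/-- The residue at `x = t y₁` of
`g(x) = x⁻¹ ∏_{i=1}^n (1-y_i/x)(1-y_i⁻¹/x)/((1-t y_i/x)(1-t y_i⁻¹/x))`,
with `y₁` listed separately and `y₂,…,y_n` indexed by `Fin (n-1)`, equals
`t^{1-2n} (1-t⁻¹)(1-t y₁²)/(1-y₁²) ∏_{2≤j≤n} (1-t y₁ y_j)(1-t y₁/y_j)/((1-y₁ y_j)(1-y₁/y_j))`. -/
theorem residue_of_shift_factor_at_ty₁
    (n : ℕ) (hn : 1 ≤ n) (t : ℂ) (ht0 : t ≠ 0) (ht1 : t ≠ 1)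
    (y₁ : ℂ) (hy₁ : y₁ ≠ 0) (y : Fin (n - 1) → ℂ) (hy : ∀ j, y j ≠ 0)
    (hsq : y₁ ^ 2 ≠ 1)
    (hsep : ∀ (j : Fin (n - 1)) (b c : Bool),
      t * y₁ ≠ (if b then t else t⁻¹) * (if c then y j else (y j)⁻¹)) :
    Tendsto
      (fun x : ℂ => (x - t * y₁) *
        (x⁻¹ * (((1 - y₁ / x) * (1 - y₁⁻¹ / x)) /
            ((1 - t * y₁ / x) * (1 - t * y₁⁻¹ / x))) *
          ∏ j, ((1 - y j / x) * (1 - (y j)⁻¹ / x)) /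
            ((1 - t * y j / x) * (1 - t * (y j)⁻¹ / x))))
      (𝓝[≠] (t * y₁))
      (𝓝 (t ^ (1 - 2 * (n : ℤ)) * ((1 - t⁻¹) * (1 - t * y₁ ^ 2) / (1 - y₁ ^ 2)) *
        ∏ j, ((1 - t * y₁ * y j) * (1 - t * y₁ / y j)) /
          ((1 - y₁ * y j) * (1 - y₁ / y j)))) := by
  have hne1 : ∀ j, y₁ - y j ≠ 0 := fun j h => by
    have := hsep j true true
    simp only [if_true] at this
    exact this (by rw [sub_eq_zero.mp h])
  have hne2 : ∀ j, y₁ * y j - 1 ≠ 0 := fun j h => by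
    have := hsep j true false
    simp only [if_true, Bool.false_eq_true, if_false] at this
    exact this (by rw [eq_inv_of_mul_eq_one_left (sub_eq_zero.mp h)])
  have hx0 : t * y₁ ≠ 0 := mul_ne_zero ht0 hy₁
  have hsq' : y₁ ^ 2 - 1 ≠ 0 := sub_ne_zero.mpr hsq
  have hsq2 : 1 - y₁ ^ 2 ≠ 0 := sub_ne_zero.mpr hsq.symm
  have hd0 : 1 - t * y₁⁻¹ / (t * y₁) ≠ 0 := by
    have : 1 - t * y₁⁻¹ / (t * y₁) = (y₁ ^ 2 - 1) / y₁ ^ 2 := by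
      field_simp
    rw [this]
    exact div_ne_zero hsq' (pow_ne_zero _ hy₁)
  have hd1 : ∀ j, 1 - t * y j / (t * y₁) ≠ 0 := fun j => by
    have : 1 - t * y j / (t * y₁) = (y₁ - y j) / y₁ := by
      field_simp
    rw [this]
    exact div_ne_zero (hne1 j) hy₁
  have hd2 : ∀ j, 1 - t * (y j)⁻¹ / (t * y₁) ≠ 0 := fun j => by
    have hj := hy j
    have : 1 - t * (y j)⁻¹ / (t * y₁) = (y₁ * y j - 1) / (y₁ * y j) := by
      field_simp
    rw [this]
    exact div_ne_zero (hne2 j) (mul_ne_zero hy₁ hj)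
  let F : ℂ → ℂ := fun x => ((1 - y₁ / x) * (1 - y₁⁻¹ / x)) / (1 - t * y₁⁻¹ / x) *
          ∏ j, ((1 - y j / x) * (1 - (y j)⁻¹ / x)) /
            ((1 - t * y j / x) * (1 - t * (y j)⁻¹ / x))
  have hc : ∀ a : ℂ, ContinuousAt (fun x : ℂ => 1 - a / x) (t * y₁) := fun a =>
    continuousAt_const.sub (continuousAt_const.div continuousAt_id hx0)
  have hF : ContinuousAt F (t * y₁) := by
    refine (((hc _).mul (hc _)).div (hc _) hd0).mul ?_
    refine tendsto_finsetProd _ fun j _ => ?_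
    exact ((hc _).mul (hc _)).div ((hc _).mul (hc _)) (mul_ne_zero (hd1 j) (hd2 j))
  have hval : F (t * y₁) = t ^ (1 - 2 * (n : ℤ)) *
      ((1 - t⁻¹) * (1 - t * y₁ ^ 2) / (1 - y₁ ^ 2)) *
        ∏ j, ((1 - t * y₁ * y j) * (1 - t * y₁ / y j)) /
          ((1 - y₁ * y j) * (1 - y₁ / y j)) := by
    have hfac : ∀ j, ((1 - y j / (t * y₁)) * (1 - (y j)⁻¹ / (t * y₁))) /
            ((1 - t * y j / (t * y₁)) * (1 - t * (y j)⁻¹ / (t * y₁))) =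
        (t ^ 2)⁻¹ * (((1 - t * y₁ * y j) * (1 - t * y₁ / y j)) /
          ((1 - y₁ * y j) * (1 - y₁ / y j))) := fun j => by
      have hj := hy j
      have h1 := hne1 j
      have h2 := hne2 j
      have e1 : 1 - t * y j / (t * y₁) = (y₁ - y j) / y₁ := by field_simp
      have e2 : 1 - t * (y j)⁻¹ / (t * y₁) = (y₁ * y j - 1) / (y₁ * y j) := by field_simp
      have e3 : 1 - y₁ * y j = -(y₁ * y j - 1) := by ring
      have e4 : 1 - y₁ / y j = -(y₁ - y j) / y j := by field_simp; ring
      rw [e1, e2, e3, e4]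
      field_simp
      ring
    have hpow : t ^ (1 - 2 * (n : ℤ)) = t⁻¹ * ((t ^ 2)⁻¹) ^ (n - 1) := by
      obtain ⟨m, rfl⟩ : ∃ m, n = m + 1 := ⟨n - 1, by omega⟩
      have : (1 - 2 * ((m + 1 : ℕ) : ℤ)) = -((1 + 2 * m : ℕ) : ℤ) := by push_cast; ring
      rw [this, zpow_neg, zpow_natCast, pow_add, pow_mul, mul_inv, pow_one, inv_pow]
      simp
    have h0 : ((1 - y₁ / (t * y₁)) * (1 - y₁⁻¹ / (t * y₁))) / (1 - t * y₁⁻¹ / (t * y₁)) =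
        t⁻¹ * ((1 - t⁻¹) * (1 - t * y₁ ^ 2) / (1 - y₁ ^ 2)) := by
      have e1 : 1 - t * y₁⁻¹ / (t * y₁) = -(1 - y₁ ^ 2) / y₁ ^ 2 := by field_simp; ring
      rw [e1]
      field_simp
      ring
    simp only [F]
    rw [h0, Finset.prod_congr rfl fun j _ => hfac j, Finset.prod_mul_distrib, hpow]
    simp only [Finset.prod_const, Finset.card_univ, Fintype.card_fin]
    ring
  rw [← hval]
  refine (hF.tendsto.mono_left nhdsWithin_le_nhds).congr' ?_
  have hx : ∀ᶠ x in 𝓝[≠] (t * y₁), x ≠ 0 :=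
    nhdsWithin_le_nhds (isOpen_ne.mem_nhds hx0)
  filter_upwards [hx, self_mem_nhdsWithin] with x hx hxne
  have hxs : x - t * y₁ ≠ 0 := sub_ne_zero.mpr hxne
  have e : 1 - t * y₁ / x = (x - t * y₁) / x := by field_simp
  have key : ∀ A B : ℂ, A / B = (x - t * y₁) * (x⁻¹ * (A / ((x - t * y₁) / x * B))) := by
    intro A B
    rw [div_mul_eq_div_div, div_div_eq_mul_div]
    field_simp
  simp only [F]
  rw [e, key, mul_assoc]
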